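/- Let C be a triangulated category with shift Σ and X a cluster tilting object, Γ = End(X). Let M be an indecomposable object of C not in add ΣX. Then the Γ-module Hom(X, M) has infinite projective dimension if and only if the ideal of End(ΣX) of endomorphisms factoring through add M is non-zero. -/

import Mathlib

/-!
Write `F = Hom(X, -)`. A triangle `X₀ → X₁ → M → ΣX₀` with `X₀, X₁` in `add X` gives a projective
presentation `F X₀ → F X₁ → F M → 0`, because `Hom(X, ΣX) = 0`; the kernel of `F X₀ → F X₁` consists
of the maps whose suspension factors as `ΣX → M → ΣX₀`.

If every composite `ΣX → M → ΣX` is zero, this kernel vanishes and `F M` has projective dimension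
at most one (`BBT.projDimLE_one`).

Conversely, let `F M` have finite projective dimension. First, the projective dimension is then at
most one (`BBT.hasProjectiveDimensionLE_one`). For this, one resolves `Σ⁻¹M` by a triangle
`Z → X' → Σ⁻¹M → ΣZ`; the first syzygy of `F M` is `F N`, for `N` the cone of the composite
`X' → Σ⁻¹M → X₀`, so by induction one may assume that the second syzygy is projective. It is then
the image of an idempotent of `F X'`, coming from `ε : X' → X'`. The map `ε` vanishes on `Z`, hence
factors through `Σ⁻¹M`, and then through `X₀` as `Hom(Σ⁻¹X₁, X') = 0`. This splits the inclusion of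
the second syzygy into `F X₀`, so the first syzygy is projective.

Secondly (`BBT.comp_eq_zero_of_hasProjectiveDimensionLE_one`), when the first syzygy is projective,
the kernel of `F X₀ → F X₁` is the image of an idempotent `e` of `X₀`, with `Σe = u ≫ h` for the
connecting map `h : M → ΣX₀` and some `u : ΣX₀ → M`. Then `h ≫ Σe ≫ u` is an idempotent of the
indecomposable object `M`. It is not the identity, as `M` is not in `add ΣX`; so it is zero, which
forces `e = 0`. Hence all composites `ΣX → M → ΣX₀` are zero, and every map `M → ΣX` factors through
`h`.
-/

open CategoryTheory CategoryTheory.Limits CategoryTheory.Pretriangulated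

/-- `Y` belongs to `add X`: it is a direct summand of a finite direct sum of copies
of `X`. -/
def InAdd {C : Type} [Category C] [Preadditive C] [HasFiniteBiproducts C]
    (X Y : C) : Prop :=
  ∃ (m : ℕ) (i : Y ⟶ ⨁ fun _ : Fin m => X) (r : (⨁ fun _ : Fin m => X) ⟶ Y),
    i ≫ r = 𝟙 Y

/-- `M` is an indecomposable object: it is non-zero and admits no non-trivial direct
sum decomposition (equivalently, its only idempotent endomorphisms are `0` and `𝟙 M`). -/
def Indec {C : Type} [Category C] [Preadditive C] [HasFiniteBiproducts C]
    (M : C) : Prop :=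
  ¬ IsZero M ∧ ∀ e : M ⟶ M, e ≫ e = e → e = 0 ∨ e = 𝟙 M

/-- The hom-group `X ⟶ M` as a right module over `Γ = End X`, i.e. a left module
over `(End X)ᵐᵒᵖ`, with action given by precomposition. -/
instance homModule {C : Type} [Category C] [Preadditive C] (X M : C) :
    Module (End X)ᵐᵒᵖ (X ⟶ M) where
  smul γ f := γ.unop ≫ f
  one_smul f := Category.id_comp f
  mul_smul γ δ f := by
    show (γ.unop ≫ δ.unop) ≫ f = γ.unop ≫ δ.unop ≫ f
    simp
  smul_zero γ := by show γ.unop ≫ (0 : X ⟶ M) = 0; simp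
  smul_add γ f g := by show γ.unop ≫ (f + g) = γ.unop ≫ f + γ.unop ≫ g; simp
  add_smul γ δ f := by
    show (MulOpposite.unop (γ + δ)) ≫ f = γ.unop ≫ f + δ.unop ≫ f; simp
  zero_smul f := by show MulOpposite.unop (0 : (End X)ᵐᵒᵖ) ≫ f = 0; simp

/-- `M` has projective dimension at most `m` over the ring `R`. -/
def ProjDimLE (R : Type) [Ring R] : ℕ → (M : Type) → [AddCommGroup M] → [Module R M] → Prop
  | 0, M, _, _ => Module.Projective R M
  | (m+1), M, _, _ => ∃ (P : Type) (_ : AddCommGroup P) (_ : Module R P)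
      (f : P →ₗ[R] M), Module.Projective R P ∧ Function.Surjective f ∧
      ProjDimLE R m (LinearMap.ker f)

/-- `X` is a cluster tilting object of the triangulated category `C`:
`Hom(X, ΣX) = 0` and every object fits into a triangle `X₀ → X₁ → C' → ΣX₀`
with `X₀, X₁ ∈ add X`. -/
structure IsClusterTilting {C : Type} [Category C] [Preadditive C] [HasZeroObject C]
    [HasShift C ℤ] [∀ n : ℤ, (shiftFunctor C n).Additive] [Pretriangulated C]
    [HasFiniteBiproducts C] (X : C) : Prop where
  vanish : ∀ f : X ⟶ X⟦(1 : ℤ)⟧, f = 0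
  resolve : ∀ C' : C, ∃ (X₀ X₁ : C) (_ : InAdd X X₀) (_ : InAdd X X₁)
    (f : X₀ ⟶ X₁) (g : X₁ ⟶ C') (h : C' ⟶ X₀⟦(1 : ℤ)⟧),
    Triangle.mk f g h ∈ distTriang C

/-- The factorization ideal `I_M` of `End(ΣX)`, consisting of the endomorphisms of
`ΣX` factoring through `add M`, is non-zero. -/
def FactIdealNonzero {C : Type} [Category C] [Preadditive C] [HasZeroObject C]
    [HasShift C ℤ] [HasFiniteBiproducts C] (X M : C) : Prop :=
  ∃ (N : C) (_ : InAdd M N) (a : X⟦(1 : ℤ)⟧ ⟶ N) (b : N ⟶ X⟦(1 : ℤ)⟧), a ≫ b ≠ 0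


namespace BBT

/-! ### Projective dimension of modules -/

section Modules

variable {R : Type} [Ring R]

lemma projective_iff_hasProjectiveDimensionLT_one (P : Type) [AddCommGroup P] [Module R P] :
    Module.Projective R P ↔ HasProjectiveDimensionLT (ModuleCat.of R P) 1 :=
  (IsProjective.iff_projective P).trans CategoryTheory.projective_iff_hasProjectiveDimensionLT_one

lemma hasProjectiveDimensionLT_ker_iff {P A : Type} [AddCommGroup P] [Module R P]
    [AddCommGroup A] [Module R A] (f : P →ₗ[R] A) (hP : Module.Projective R P)
    (hf : Function.Surjective f) (n : ℕ) :
    HasProjectiveDimensionLT (ModuleCat.of R A) (n + 2) ↔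
      HasProjectiveDimensionLT (ModuleCat.of R (LinearMap.ker f)) (n + 1) :=
  (LinearMap.shortExact_shortComplexKer hf).hasProjectiveDimensionLT_X₃_iff n
    ((IsProjective.iff_projective P).1 hP)

/-- The recursive definition of projective dimension is compared with the `Ext`-theoretic one,
which does not depend on the choice of a resolution. -/
lemma hasProjectiveDimensionLE_of_projDimLE (m : ℕ) : ∀ (A : Type) [AddCommGroup A] [Module R A],
    ProjDimLE R m A → HasProjectiveDimensionLE (ModuleCat.of R A) m := by
  induction m with
  | zero =>
    intro A _ _ h
    exact (projective_iff_hasProjectiveDimensionLT_one A).1 h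
  | succ m ih =>
    rintro A _ _ ⟨P, _, _, f, hP, hf, h⟩
    exact (hasProjectiveDimensionLT_ker_iff f hP hf m).2 (ih _ h)

lemma hasProjectiveDimensionLT_of_equiv {A B : Type} [AddCommGroup A] [Module R A]
    [AddCommGroup B] [Module R B] (e : A ≃ₗ[R] B) (n : ℕ)
    (h : HasProjectiveDimensionLT (ModuleCat.of R A) n) :
    HasProjectiveDimensionLT (ModuleCat.of R B) n :=
  hasProjectiveDimensionLT_of_iso e.toModuleIso n

/-- If the kernel of a surjection from a projective module onto `A` is a direct summand, then `A`
is projective. -/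
lemma projective_of_ker_retract {P A : Type} [AddCommGroup P] [Module R P]
    [AddCommGroup A] [Module R A] (f : P →ₗ[R] A) (hP : Module.Projective R P)
    (hf : Function.Surjective f) (r : P →ₗ[R] LinearMap.ker f)
    (hr : ∀ k : LinearMap.ker f, r k = k) : Module.Projective R A := by
  have hex : Function.Exact (LinearMap.ker f).subtype f := LinearMap.exact_subtype_ker_map f
  have hr' : ∃ l : P →ₗ[R] LinearMap.ker f, l ∘ₗ (LinearMap.ker f).subtype = LinearMap.id :=
    ⟨r, LinearMap.ext hr⟩
  obtain ⟨s, hs⟩ := ((hex.split_tfae Subtype.val_injective hf).out 0 1 rfl rfl).2 hr'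
  exact Module.Projective.of_split s f hs

end Modules

/-! ### The functor `Hom(X, -)` on `add X` -/

section Hom

variable {C : Type} [Category C] [Preadditive C]

/-- The `Γ`-linear map `Hom(X, g) : Hom(X, Y) → Hom(X, Z)`, for `Γ = End X`. -/
def homMap (X : C) {Y Z : C} (g : Y ⟶ Z) : (X ⟶ Y) →ₗ[(End X)ᵐᵒᵖ] (X ⟶ Z) where
  toFun x := x ≫ g
  map_add' _ _ := Preadditive.add_comp _ _ _ _ _ _
  map_smul' _ _ := Category.assoc _ _ _

@[simp] lemma homMap_apply (X : C) {Y Z : C} (g : Y ⟶ Z) (x : X ⟶ Y) :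
    homMap X g x = x ≫ g := rfl

lemma smul_hom (X : C) {Y : C} (γ : (End X)ᵐᵒᵖ) (x : X ⟶ Y) : γ • x = γ.unop ≫ x := rfl

variable [HasFiniteBiproducts C]

lemma inAdd_self (X : C) : InAdd X X :=
  ⟨1, biproduct.ι (fun _ : Fin 1 => X) 0, biproduct.π (fun _ : Fin 1 => X) 0, by simp⟩

/-- An object `Y` of `add X` is described by maps `Y → X` and `X → Y` (finitely many of
each) whose composites sum to the identity of `Y`. -/
lemma _root_.InAdd.exists_sum {X Y : C} (hY : InAdd X Y) :
    ∃ (m : ℕ) (p : Fin m → (Y ⟶ X)) (q : Fin m → (X ⟶ Y)), ∑ k, p k ≫ q k = 𝟙 Y := by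
  obtain ⟨m, i, r, h⟩ := hY
  refine ⟨m, fun k => i ≫ biproduct.π _ k, fun k => biproduct.ι (fun _ : Fin m => X) k ≫ r, ?_⟩
  have := congrArg (fun t => i ≫ t ≫ r) (biproduct.total (f := fun _ : Fin m => X))
  simp only [Preadditive.sum_comp, Preadditive.comp_sum, Category.id_comp, h] at this
  simpa using this

lemma inAdd_of_sum {X Y : C} {m : ℕ} (p : Fin m → (Y ⟶ X)) (q : Fin m → (X ⟶ Y))
    (h : ∑ k, p k ≫ q k = 𝟙 Y) : InAdd X Y :=
  ⟨m, biproduct.lift p, biproduct.desc q, by simp [biproduct.lift_desc, h]⟩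

lemma _root_.InAdd.hom_ext {X Y Z : C} (hY : InAdd X Y) {f g : Y ⟶ Z}
    (h : ∀ x : X ⟶ Y, x ≫ f = x ≫ g) : f = g := by
  obtain ⟨m, p, q, hpq⟩ := hY.exists_sum
  rw [← Category.id_comp f, ← Category.id_comp g, ← hpq]
  simp [Preadditive.sum_comp, h]

lemma _root_.InAdd.hom_eq_zero {X Y Z : C} (hY : InAdd X Y) {f : Y ⟶ Z}
    (h : ∀ x : X ⟶ Y, x ≫ f = 0) : f = 0 :=
  hY.hom_ext fun x => by simp [h]

lemma _root_.InAdd.eq_zero_of_comp {X Y Z : C} (hZ : InAdd X Z) {f : Y ⟶ Z}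
    (h : ∀ x : Z ⟶ X, f ≫ x = 0) : f = 0 := by
  obtain ⟨m, p, q, hpq⟩ := hZ.exists_sum
  rw [← Category.comp_id f, ← hpq]
  simp [Preadditive.comp_sum, reassoc_of% h]

/-- `Hom(X, -)` is full on morphisms whose source lies in `add X`. -/
lemma _root_.InAdd.full {X Y Z : C} (hY : InAdd X Y) (φ : (X ⟶ Y) →ₗ[(End X)ᵐᵒᵖ] (X ⟶ Z)) :
    ∃ g : Y ⟶ Z, ∀ x, φ x = x ≫ g := by
  obtain ⟨m, p, q, hpq⟩ := hY.exists_sum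
  refine ⟨∑ k, p k ≫ φ (q k), fun x => ?_⟩
  have hx : x = ∑ k, (MulOpposite.op (x ≫ p k) : (End X)ᵐᵒᵖ) • q k := by
    conv_lhs => rw [← Category.comp_id x, ← hpq]
    simp [Preadditive.comp_sum, smul_hom]
  conv_lhs => rw [hx]
  simp only [map_sum, map_smul]
  simp [Preadditive.comp_sum, smul_hom]

lemma _root_.InAdd.projective {X Y : C} (hY : InAdd X Y) :
    Module.Projective (End X)ᵐᵒᵖ (X ⟶ Y) := by
  obtain ⟨m, p, q, hpq⟩ := hY.exists_sum
  let i : (X ⟶ Y) →ₗ[(End X)ᵐᵒᵖ] (Fin m → (End X)ᵐᵒᵖ) :=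
    { toFun x k := MulOpposite.op (x ≫ p k : End X)
      map_add' x y := by
        funext k
        exact congrArg MulOpposite.op (Preadditive.add_comp _ _ _ x y (p k))
      map_smul' γ x := by
        funext k
        exact congrArg MulOpposite.op (Category.assoc γ.unop x (p k)) }
  refine Module.Projective.of_split i (Fintype.linearCombination (End X)ᵐᵒᵖ q) ?_
  ext x
  conv_rhs => rw [LinearMap.id_apply, ← Category.comp_id x, ← hpq]
  simp [Fintype.linearCombination_apply, i, smul_hom, Preadditive.comp_sum]

lemma _root_.InAdd.shift [HasShift C ℤ] [∀ n : ℤ, (shiftFunctor C n).Additive]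
    {X Y : C} (hY : InAdd X Y) : InAdd (X⟦(1 : ℤ)⟧) (Y⟦(1 : ℤ)⟧) := by
  obtain ⟨m, p, q, hpq⟩ := hY.exists_sum
  refine inAdd_of_sum (fun k => (p k)⟦(1 : ℤ)⟧') (fun k => (q k)⟦(1 : ℤ)⟧') ?_
  simp only [← Functor.map_comp, ← Functor.map_sum, hpq]
  exact CategoryTheory.Functor.map_id _ _

/-- Membership in `add M` plays no role in the non-vanishing of the ideal: a map factoring
through `add M` is a sum of maps factoring through `M`. -/
lemma factIdealNonzero_iff [HasZeroObject C] [HasShift C ℤ] {X M : C} :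
    FactIdealNonzero X M ↔
    ∃ (a : X⟦(1 : ℤ)⟧ ⟶ M) (b : M ⟶ X⟦(1 : ℤ)⟧), a ≫ b ≠ 0 := by
  constructor
  · rintro ⟨N, hN, a, b, hab⟩
    by_contra! hI
    obtain ⟨m, p, q, hpq⟩ := hN.exists_sum
    apply hab
    rw [← Category.id_comp b, ← hpq]
    simp only [Preadditive.sum_comp, Preadditive.comp_sum]
    refine Finset.sum_eq_zero fun k _ => ?_
    simpa using hI (a ≫ p k) (q k ≫ b)
  · rintro ⟨a, b, hab⟩
    exact ⟨M, inAdd_self M, a, b, hab⟩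

end Hom

/-! ### Cluster tilting objects -/

section Triangulated

variable {C : Type} [Category.{0} C] [Preadditive C] [HasZeroObject C]
  [HasShift C ℤ] [∀ n : ℤ, (shiftFunctor C n).Additive] [Pretriangulated C]
  {X X₀ X₁ M : C} {f : X₀ ⟶ X₁} {g : X₁ ⟶ M} {h : M ⟶ X₀⟦(1 : ℤ)⟧}

lemma exists_of_mem_ker (hT : Triangle.mk f g h ∈ distTriang C) {Y : C} (x : Y ⟶ X₁)
    (hx : x ≫ g = 0) : ∃ y : Y ⟶ X₀, y ≫ f = x := by
  obtain ⟨y, hy⟩ := Triangle.coyoneda_exact₂ _ hT x hx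
  exact ⟨y, hy.symm⟩

/-- The map from `Hom(X, X₀)` to the first syzygy `ker Hom(X, g)` of `Hom(X, M)` induced by a
triangle `X₀ → X₁ → M → ΣX₀`. -/
def toSyzygy (X : C) (hT : Triangle.mk f g h ∈ distTriang C) :
    (X ⟶ X₀) →ₗ[(End X)ᵐᵒᵖ] LinearMap.ker (homMap X g) :=
  (homMap X f).codRestrict _ fun x => by
    have : f ≫ g = 0 := comp_distTriang_mor_zero₁₂ _ hT
    simp [this]

lemma toSyzygy_surjective (hT : Triangle.mk f g h ∈ distTriang C) :
    Function.Surjective (toSyzygy X hT) := by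
  rintro ⟨x, hx⟩
  obtain ⟨y, hy⟩ := exists_of_mem_ker hT x hx
  exact ⟨y, Subtype.ext hy⟩

lemma toSyzygy_eq_zero_iff (hT : Triangle.mk f g h ∈ distTriang C) (x : X ⟶ X₀) :
    toSyzygy X hT x = 0 ↔ x ≫ f = 0 := by
  rw [← Subtype.coe_inj]; rfl

variable [HasFiniteBiproducts C]

lemma vanish_add (hX : IsClusterTilting X) {Y Z : C} (hY : InAdd X Y) (hZ : InAdd X Z)
    (f : Y ⟶ Z⟦(1 : ℤ)⟧) : f = 0 :=
  hY.hom_eq_zero fun x => hZ.shift.eq_zero_of_comp fun y => by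
    simpa using hX.vanish ((x ≫ f) ≫ y)

/-- `Hom(Σ⁻¹Y, Z) = 0` for `Y`, `Z` in `add X`. -/
lemma vanish_add' (hX : IsClusterTilting X) {Y Z : C} (hY : InAdd X Y) (hZ : InAdd X Z)
    (f : Y⟦(-1 : ℤ)⟧ ⟶ Z) : f = 0 := by
  apply (shiftFunctor C (1 : ℤ)).map_injective
  rw [Functor.map_zero, ← cancel_epi ((shiftFunctorCompIsoId C (-1 : ℤ) 1 (by simp)).inv.app Y)]
  rw [comp_zero]
  exact vanish_add hX hY hZ _

lemma homMap_surjective (hX : IsClusterTilting X) (h₀ : InAdd X X₀)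
    (hT : Triangle.mk f g h ∈ distTriang C) : Function.Surjective (homMap X g) := by
  intro x
  obtain ⟨y, hy⟩ := Triangle.coyoneda_exact₃ _ hT x (vanish_add hX (inAdd_self X) h₀ _)
  exact ⟨y, hy.symm⟩

/-- Finite projective dimension of `Hom(X, M)` forces projective dimension at most one. If the
second syzygy is projective, it is cut out of `Hom(X, X')` by an idempotent `ε` which factors
through `X₀` because of `Hom(X, ΣX) = 0` (this is the vanishing of `Ext²(Hom(X, M), Γ)`), so it
is a direct summand of `Hom(X, X₀)` and the first syzygy is projective. -/
lemma hasProjectiveDimensionLE_one (hX : IsClusterTilting X) (m : ℕ) : ∀ M : C,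
    HasProjectiveDimensionLE (ModuleCat.of (End X)ᵐᵒᵖ (X ⟶ M)) (m + 1) →
    HasProjectiveDimensionLE (ModuleCat.of (End X)ᵐᵒᵖ (X ⟶ M)) 1 := by
  induction m with
  | zero => exact fun M h => h
  | succ m ih =>
    intro M hM
    obtain ⟨X₀, X₁, h₀, h₁, f, g, h, hT⟩ := hX.resolve M
    have hg := homMap_surjective hX h₀ hT
    have hiff := hasProjectiveDimensionLT_ker_iff (homMap X g) h₁.projective hg
    have hΩ := (hiff (m + 1)).1 hM
    obtain ⟨Z, X', hZ, h', j, a, k, hT'⟩ := hX.resolve (M⟦(-1 : ℤ)⟧)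
    have ha := homMap_surjective hX hZ hT'
    have hTi := inv_rot_of_distTriang _ hT
    have hTii := inv_rot_of_distTriang _ hTi
    obtain ⟨w, hw⟩ : ∃ w : M⟦(-1 : ℤ)⟧ ⟶ X₀, w = (Triangle.mk f g h).invRotate.mor₁ := ⟨_, rfl⟩
    have hwf : w ≫ f = 0 := by
      rw [hw]
      exact comp_distTriang_mor_zero₁₂ _ hTi
    obtain ⟨N, n, δ, hN⟩ := distinguished_cocone_triangle (a ≫ w)
    have hn := homMap_surjective hX h' hN
    have hπ := toSyzygy_surjective (X := X) hT
    -- Exactness of `Hom(X, X') → Hom(X, X₀) → Hom(X, X₁)`.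
    have hex : ∀ x : X ⟶ X₀, x ≫ f = 0 → ∃ y : X ⟶ X', y ≫ a ≫ w = x := by
      intro x hx
      obtain ⟨y, hy⟩ := Triangle.coyoneda_exact₂ _ hTi x hx
      obtain ⟨z, hz⟩ := ha y
      refine ⟨z, ?_⟩
      rw [hw, hy, ← hz]
      exact (Category.assoc _ _ _).symm
    -- The syzygy is again of the form `Hom(X, N)`.
    have hker : LinearMap.ker (homMap X n) = LinearMap.ker (toSyzygy X hT) := by
      ext x
      rw [LinearMap.mem_ker, LinearMap.mem_ker, toSyzygy_eq_zero_iff, homMap_apply]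
      constructor
      · intro hx
        obtain ⟨y, rfl⟩ := exists_of_mem_ker hN x hx
        simp [hwf]
      · intro hx
        obtain ⟨y, rfl⟩ := hex x hx
        have : (a ≫ w) ≫ n = 0 := comp_distTriang_mor_zero₁₂ _ hN
        rw [Category.assoc, this, comp_zero]
    let e : (X ⟶ N) ≃ₗ[(End X)ᵐᵒᵖ] LinearMap.ker (homMap X g) :=
      (LinearMap.quotKerEquivOfSurjective _ hn).symm ≪≫ₗ
        Submodule.quotEquivOfEq _ _ hker ≪≫ₗ LinearMap.quotKerEquivOfSurjective _ hπ
    have hΩ₁ := hasProjectiveDimensionLT_of_equiv e _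
      (ih N (hasProjectiveDimensionLT_of_equiv e.symm _ hΩ))
    -- Hence the second syzygy `K` is projective.
    have hK : Module.Projective (End X)ᵐᵒᵖ (LinearMap.ker (toSyzygy X hT)) :=
      (projective_iff_hasProjectiveDimensionLT_one _).2
        ((hasProjectiveDimensionLT_ker_iff (toSyzygy X hT) h₀.projective hπ 0).1 hΩ₁)
    let ρ : (X ⟶ X') →ₗ[(End X)ᵐᵒᵖ] LinearMap.ker (toSyzygy X hT) :=
      (homMap X (a ≫ w)).codRestrict _ fun x => by
        rw [LinearMap.mem_ker, toSyzygy_eq_zero_iff]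
        simp [hwf]
    have hρ : Function.Surjective ρ := by
      rintro ⟨x, hx⟩
      obtain ⟨y, hy⟩ := hex x ((toSyzygy_eq_zero_iff hT x).1 hx)
      exact ⟨y, Subtype.ext hy⟩
    obtain ⟨s, hs⟩ := Module.projective_lifting_property ρ LinearMap.id hρ
    have hs' : ∀ k, ρ (s k) = k := fun k => LinearMap.congr_fun hs k
    obtain ⟨ε, hε⟩ := h'.full (s ∘ₗ ρ)
    -- `ε` vanishes on `Z`, hence factors through `M⟦-1⟧`, and then through `X₀`.
    have hjε : j ≫ ε = 0 := hZ.hom_eq_zero fun x => by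
      have hja : j ≫ a = 0 := comp_distTriang_mor_zero₁₂ _ hT'
      have : ρ (x ≫ j) = 0 := Subtype.ext (by
        change (x ≫ j) ≫ a ≫ w = 0
        rw [Category.assoc, reassoc_of% hja, zero_comp, comp_zero])
      rw [← Category.assoc, ← hε, LinearMap.comp_apply, this, map_zero]
    obtain ⟨ε', hε'⟩ := Triangle.yoneda_exact₂ _ hT' ε hjε
    obtain ⟨d, hεd⟩ : ∃ d : X₀ ⟶ X', ε = (a ≫ w) ≫ d := by
      obtain ⟨d, hd⟩ := Triangle.yoneda_exact₂ _ hTii ε' (vanish_add' hX h₁ h' _)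
      refine ⟨d, ?_⟩
      rw [hε', hd, hw]
      exact (Category.assoc _ _ _).symm
    have hΩp : Module.Projective (End X)ᵐᵒᵖ (LinearMap.ker (homMap X g)) := by
      refine projective_of_ker_retract _ h₀.projective hπ (ρ ∘ₗ homMap X d) fun k => ?_
      obtain ⟨x, rfl⟩ := hρ k
      have h1 : homMap X d (ρ x : X ⟶ X₀) = s (ρ x) := by
        change (x ≫ a ≫ w) ≫ d = (s ∘ₗ ρ) x
        rw [hε, hεd, Category.assoc]
      rw [LinearMap.comp_apply, h1, hs']
    exact (hiff 0).2 ((projective_iff_hasProjectiveDimensionLT_one _).1 hΩp)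

/-- If `Hom(X, M)` has projective dimension at most one, the kernel of
`Hom(X, X₀) → Hom(X, X₁)` is cut out by an idempotent `e` of `X₀`, and `Σe` factors through `M`.
Indecomposability of `M` then leaves only two cases: `M` is a summand of `ΣX₀`, which is
excluded, or `e = 0`. -/
lemma comp_eq_zero_of_hasProjectiveDimensionLE_one (hX : IsClusterTilting X)
    (hM : Indec M) (hM' : ¬ InAdd (X⟦(1 : ℤ)⟧) M)
    (hpd : HasProjectiveDimensionLE (ModuleCat.of (End X)ᵐᵒᵖ (X ⟶ M)) 1)
    (a : X⟦(1 : ℤ)⟧ ⟶ M) (b : M ⟶ X⟦(1 : ℤ)⟧) : a ≫ b = 0 := by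
  obtain ⟨X₀, X₁, h₀, h₁, f, g, h, hT⟩ := hX.resolve M
  have hg := homMap_surjective hX h₀ hT
  have hπ := toSyzygy_surjective (X := X) hT
  have hiff := hasProjectiveDimensionLT_ker_iff (homMap X g) h₁.projective hg 0
  have hΩ := (projective_iff_hasProjectiveDimensionLT_one _).2 (hiff.1 hpd)
  obtain ⟨s, hs⟩ := Module.projective_lifting_property (toSyzygy X hT) LinearMap.id hπ
  have hs' : ∀ k, toSyzygy X hT (s k) = k := fun k => LinearMap.congr_fun hs k
  -- `e` is the projection of `Hom(X, X₀)` onto the kernel of `Hom(X, f)`.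
  obtain ⟨e, he⟩ := h₀.full (LinearMap.id - s ∘ₗ toSyzygy X hT)
  have hfix : ∀ x : X ⟶ X₀, x ≫ f = 0 → x ≫ e = x := fun x hx => by
    rw [← he, LinearMap.sub_apply, LinearMap.comp_apply, (toSyzygy_eq_zero_iff hT x).2 hx]
    simp
  have hef : e ≫ f = 0 := h₀.hom_eq_zero fun x => by
    rw [← Category.assoc, ← he, ← toSyzygy_eq_zero_iff hT]
    simp [hs']
  have hee : e ≫ e = e := h₀.hom_ext fun x => by
    rw [← Category.assoc]
    exact hfix _ (by rw [Category.assoc, hef, comp_zero])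
  obtain ⟨u, hu⟩ : ∃ u : X₀⟦(1 : ℤ)⟧ ⟶ M, e⟦(1 : ℤ)⟧' = u ≫ h :=
    Triangle.coyoneda_exact₁ _ hT (e⟦(1 : ℤ)⟧') (by
      change e⟦(1 : ℤ)⟧' ≫ f⟦(1 : ℤ)⟧' = 0
      rw [← Functor.map_comp, hef, Functor.map_zero])
  have hEE : e⟦(1 : ℤ)⟧' ≫ e⟦(1 : ℤ)⟧' = e⟦(1 : ℤ)⟧' := by rw [← Functor.map_comp, hee]
  have huE : u ≫ h = e⟦(1 : ℤ)⟧' := hu.symm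
  generalize heE : e⟦(1 : ℤ)⟧' = E at hEE huE
  -- `h ≫ E ≫ u` is an idempotent endomorphism of `M`.
  have hp : (h ≫ E ≫ u) ≫ h ≫ E ≫ u = h ≫ E ≫ u := by
    simp only [Category.assoc, reassoc_of% huE, reassoc_of% hEE]
  have hE : E = 0 := by
    rcases hM.2 _ hp with hp | hp
    · have h1 : u ≫ (h ≫ E ≫ u) ≫ h = E := by
        simp only [Category.assoc, huE, reassoc_of% huE, hEE]
      rw [← h1, hp, zero_comp, comp_zero]
    · obtain ⟨m, p, q, hpq⟩ := h₀.shift.exists_sum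
      refine (hM' (inAdd_of_sum (fun k => h ≫ p k) (fun k => q k ≫ E ≫ u) ?_)).elim
      have h1 := congrArg (fun t => h ≫ t ≫ E ≫ u) hpq
      simpa [Preadditive.sum_comp, Preadditive.comp_sum, hp] using h1
  obtain rfl : e = 0 := (shiftFunctor C (1 : ℤ)).map_injective (by rw [Functor.map_zero, heE, hE])
  -- As `Hom(X, f)` is injective, no nonzero map `ΣX → M` survives composition with `h`.
  have hah : a ≫ h = 0 := by
    obtain ⟨x, hx⟩ := (shiftFunctor C (1 : ℤ)).map_surjective (a ≫ h)
    have hxf : x ≫ f = 0 := (shiftFunctor C (1 : ℤ)).map_injective (by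
      have h1 : h ≫ f⟦(1 : ℤ)⟧' = 0 := comp_distTriang_mor_zero₃₁ _ hT
      rw [Functor.map_comp, hx, Category.assoc, h1, comp_zero, Functor.map_zero])
    rw [← hx, ← hfix x hxf, comp_zero, Functor.map_zero]
  obtain ⟨b', hb'⟩ : ∃ b' : X₀⟦(1 : ℤ)⟧ ⟶ X⟦(1 : ℤ)⟧, b = h ≫ b' :=
    Triangle.yoneda_exact₃ _ hT b (vanish_add hX h₁ (inAdd_self X) _)
  rw [hb', reassoc_of% hah, zero_comp]

/-- If all composites `ΣX → M → ΣX` vanish, then `Hom(X, X₀) → Hom(X, X₁)` is injective, and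
`0 → Hom(X, X₀) → Hom(X, X₁) → Hom(X, M) → 0` is a projective resolution. -/
lemma projDimLE_one (hX : IsClusterTilting X)
    (hI : ∀ (a : X⟦(1 : ℤ)⟧ ⟶ M) (b : M ⟶ X⟦(1 : ℤ)⟧), a ≫ b = 0) :
    ProjDimLE (End X)ᵐᵒᵖ 1 (X ⟶ M) := by
  obtain ⟨X₀, X₁, h₀, h₁, f, g, h, hT⟩ := hX.resolve M
  have hinj : Function.Injective (toSyzygy X hT) := by
    rw [injective_iff_map_eq_zero]
    intro x hx
    rw [toSyzygy_eq_zero_iff] at hx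
    obtain ⟨y, hy⟩ : ∃ y : X⟦(1 : ℤ)⟧ ⟶ M, x⟦(1 : ℤ)⟧' = y ≫ h :=
      Triangle.coyoneda_exact₁ _ hT (x⟦(1 : ℤ)⟧') (by
        change x⟦(1 : ℤ)⟧' ≫ f⟦(1 : ℤ)⟧' = 0
        rw [← Functor.map_comp, hx, Functor.map_zero])
    apply (shiftFunctor C (1 : ℤ)).map_injective
    rw [Functor.map_zero]
    refine h₀.shift.eq_zero_of_comp fun z => ?_
    rw [hy, Category.assoc, hI]
  exact ⟨_, _, _, homMap X g, h₁.projective, homMap_surjective hX h₀ hT,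
    haveI := h₀.projective
    Module.Projective.of_equiv (LinearEquiv.ofBijective _ ⟨hinj, toSyzygy_surjective hT⟩)⟩

end Triangulated

end BBT

/-- (Beaudet–Brüstle–Todorov) Let C be a triangulated category with shift Σ and X a
cluster tilting object, Γ = End(X). Let M be an indecomposable object of C not in
add ΣX. Then the Γ-module Hom(X, M) has infinite projective dimension if and only
if the ideal of End(ΣX) of endomorphisms factoring through add M is non-zero. -/
theorem stmt_9 {C : Type} [Category C] [Preadditive C] [HasZeroObject C]
    [HasShift C ℤ] [∀ n : ℤ, (shiftFunctor C n).Additive] [Pretriangulated C]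
    [HasFiniteBiproducts C] (X : C) (hX : IsClusterTilting X)
    (M : C) (hM : Indec M) (hM' : ¬ InAdd (X⟦(1 : ℤ)⟧) M) :
    (¬ ∃ m : ℕ, ProjDimLE (End X)ᵐᵒᵖ m (X ⟶ M)) ↔ FactIdealNonzero X M := by
  rw [BBT.factIdealNonzero_iff, not_iff_comm]
  push Not
  constructor
  · exact fun hI => ⟨1, BBT.projDimLE_one hX hI⟩
  · rintro ⟨m, hm⟩
    have h₁ := BBT.hasProjectiveDimensionLE_of_projDimLE m _ hm
    exact BBT.comp_eq_zero_of_hasProjectiveDimensionLE_one hX hM hM'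
      (BBT.hasProjectiveDimensionLE_one hX m M (hasProjectiveDimensionLT_of_ge _ (m + 1) _ (by lia)))
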